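/- arXiv:2406.00709 — 3 statements merged into one kernel-verified Lean document; each statement's English description precedes it below -/
import Mathlib

section
/- Let R be a ring, e ∈ R an idempotent, N a left R-module, and N' an additive subgroup of N such that e•x = x for every x ∈ N' and (e·r·e)•x ∈ N' for every r ∈ R and x ∈ N'. Let M be the R-submodule of N generated by N'. Then e•M = N', i.e. {e•m : m ∈ M} = N'. (This identity is the key step in the paper's proof of the adjunction between the functors τ* and τ∗: every corner-stable submodule N' of e•N is recovered by cornering the R-submodule it generates.) -/
theorem map_mem_of_mem_span {R N A : Type*} [Semiring R] [AddCommMonoid N] [Module R N]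
    [AddZeroClass A] (f : N →+ A) {P : AddSubmonoid A} {s : Set N}
    (hs : ∀ (r : R), ∀ x ∈ s, f (r • x) ∈ P) {m : N} (hm : m ∈ Submodule.span R s) :
    f m ∈ P := by
  induction hm using Submodule.closure_induction with
  | zero => simp only [map_zero, zero_mem]
  | add x y _ _ hx hy => simpa only [map_add] using add_mem hx hy
  | smul_mem r x hx => exact hs r x hx

theorem corner_of_span_general {R N : Type*} [Semiring R] [AddCommMonoid N] [Module R N]
    (e : R) (N' : AddSubmonoid N) (smul_eq_self : ∀ x ∈ N', e • x = x)
    (corner_mem : ∀ (r : R), ∀ x ∈ N', (e * r * e) • x ∈ N') :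
    (fun m : N => e • m) '' (Submodule.span R (N' : Set N) : Set N) = (N' : Set N) := by
  have smul_smul_mem (r : R) (x : N) (hx : x ∈ N') : e • r • x ∈ N' := by
    simpa only [mul_smul, smul_eq_self x hx] using corner_mem r x hx
  apply Set.Subset.antisymm
  · rintro _ ⟨m, hm, rfl⟩
    exact map_mem_of_mem_span (DistribSMul.toAddMonoidHom N e) smul_smul_mem hm
  · intro x hx
    exact ⟨x, Submodule.subset_span hx, smul_eq_self x hx⟩

/-- A corner-stable subgroup `N'` of `e • N` is recovered by cornering the
`R`-submodule it generates: `e • span R N' = N'`. -/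
theorem corner_of_span (R : Type*) [Ring R] (e : R) (he : e * e = e)
    (N : Type*) [AddCommGroup N] [Module R N]
    (N' : AddSubgroup N)
    (h1 : ∀ x ∈ N', e • x = x)
    (h2 : ∀ (r : R), ∀ x ∈ N', (e * r * e) • x ∈ N') :
    (fun m : N => e • m) '' (Submodule.span R (N' : Set N) : Set N) = (N' : Set N) :=
  corner_of_span_general e N'.toAddSubmonoid h1 h2
end

section
/- Let k be a field, A an associative k-algebra, and e ∈ A an idempotent. Suppose A·e is finitely generated as a right module over the corner ring eAe, i.e. there exist x₁, …, x_n ∈ A·e such that every element of A·e is a finite sum Σᵢ xᵢ·(e·rᵢ·e) with rᵢ ∈ A. Let N be a left A-module and N' a finite-dimensional k-subspace of N such that e•x = x for every x ∈ N' and (e·r·e)•x ∈ N' for every r ∈ A and x ∈ N'. Then the A-submodule of N generated by N' is finite-dimensional over k. (This is the module-level content of the paper's lemma that the cornering functor j_! takes finite-dimensional modules to finite-dimensional modules.) -/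
/-!
Let `X` be the `k`-span of the generators of `Ae` over `eAe`. Since `e` fixes `N'` and `eAe`
stabilises it, `A N' = Ae N' ⊆ X (eAe) N' ⊆ X N'`, and `X N'` is the image of `X ⊗ N'`.
-/

section Semiring

variable {k A N : Type*} [Semiring k] [Semiring A] [Module k A]
  [AddCommMonoid N] [Module A N] [Module k N] [IsScalarTower k A N]

theorem restrictScalars_span_eq_top_smul (P : Submodule k N) :
    (Submodule.span A (P : Set N)).restrictScalars k = (⊤ : Submodule k A) • P := by
  apply le_antisymm
  · intro y (hy : y ∈ Submodule.span A (P : Set N))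
    induction hy using Submodule.closure_induction with
    | zero => exact zero_mem _
    | add y z _ _ ihy ihz => exact add_mem ihy ihz
    | smul_mem a y hy => exact Submodule.smul_mem_smul Submodule.mem_top hy
  · exact Submodule.smul_le.mpr fun a _ y hy ↦
      Submodule.smul_mem _ a (Submodule.subset_span hy)

theorem restrictScalars_span_eq_smul [IsScalarTower k A A] {E X C : Submodule k A}
    {P : Submodule k N} (hE : P ≤ E • P) (hX : ⊤ * E ≤ X * C) (hC : C • P ≤ P) :
    (Submodule.span A (P : Set N)).restrictScalars k = X • P := by
  rw [restrictScalars_span_eq_top_smul]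
  refine le_antisymm ?_ (Submodule.smul_mono_left le_top)
  calc
    (⊤ : Submodule k A) • P ≤ ⊤ • E • P := Submodule.smul_mono le_rfl hE
    _ = (⊤ * E) • P := (Submodule.smul_assoc _ _ _).symm
    _ ≤ (X * C) • P := Submodule.smul_mono_left hX
    _ = X • C • P := Submodule.smul_assoc _ _ _
    _ ≤ X • P := Submodule.smul_mono le_rfl hC

end Semiring

section Algebra

variable {k A N : Type*} [CommSemiring k] [Semiring A] [Algebra k A]
  [AddCommMonoid N] [Module A N] [Module k N] [IsScalarTower k A N]

theorem fg_smul {X : Submodule k A} {P : Submodule k N} (hX : X.FG) (hP : P.FG) :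
    (X • P).FG := by
  have smul_eq_map₂ : X • P = Submodule.map₂ (Algebra.lsmul k k N).toLinearMap X P :=
    le_antisymm (Submodule.smul_le.mpr fun _ hx _ hy ↦ Submodule.apply_mem_map₂ _ hx hy)
      (Submodule.map₂_le.mpr fun _ hx _ hy ↦ Submodule.smul_mem_smul hx hy)
  exact smul_eq_map₂ ▸ hX.map₂ _ hP

theorem span_of_corner_findim_general {ι : Type*} [Fintype ι] (e : A) (x : ι → A)
    (hx : ∀ a : A, ∃ r : ι → A, a * e = ∑ i, x i * (e * r i * e))
    (P : Submodule k N) (hP : P.FG) (hfix : ∀ y ∈ P, e • y = y)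
    (hcorner : ∀ r : A, ∀ y ∈ P, (e * r * e) • y ∈ P) :
    ((Submodule.span A (P : Set N)).restrictScalars k).FG := by
  let X : Submodule k A := Submodule.span k (Set.range x)
  let C : Submodule k A := LinearMap.range (LinearMap.mulLeftRight k (e, e))
  have le_smul : P ≤ Submodule.span k {e} • P := fun y hy ↦
    hfix y hy ▸ Submodule.smul_mem_smul (Submodule.mem_span_singleton_self e) hy
  have top_mul_le : ⊤ * Submodule.span k {e} ≤ X * C := by
    intro b hb
    obtain ⟨a, -, rfl⟩ := Submodule.mem_mul_span_singleton.mp hb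
    obtain ⟨r, hr⟩ := hx a
    rw [hr]
    exact sum_mem fun i _ ↦
      Submodule.mul_mem_mul (Submodule.subset_span ⟨i, rfl⟩) ⟨r i, rfl⟩
  have corner_smul_le : C • P ≤ P := by
    refine Submodule.smul_le.mpr ?_
    rintro _ ⟨r, rfl⟩ y hy
    exact hcorner r y hy
  rw [restrictScalars_span_eq_smul le_smul top_mul_le corner_smul_le]
  exact fg_smul (Submodule.fg_span (Set.finite_range x)) hP

end Algebra

/-- If `A·e` is finitely generated as a right `eAe`-module, then the `A`-submodule
generated by a finite-dimensional corner-stable subspace `N'` of a left `A`-module `N`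
is finite-dimensional over `k`. -/
theorem span_of_corner_findim (k : Type*) [Field k] (A : Type*) [Ring A] [Algebra k A]
    (e : A) (he : e * e = e)
    (hfg : ∃ (n : ℕ) (x : Fin n → A), (∀ i, ∃ a : A, x i = a * e) ∧
      ∀ a : A, ∃ r : Fin n → A, a * e = ∑ i, x i * (e * r i * e))
    (N : Type*) [AddCommGroup N] [Module A N] [Module k N] [IsScalarTower k A N]
    (N' : Submodule k N) [FiniteDimensional k N']
    (h1 : ∀ x ∈ N', e • x = x)
    (h2 : ∀ (r : A), ∀ x ∈ N', (e * r * e) • x ∈ N') :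
    FiniteDimensional k
      (Submodule.restrictScalars k (Submodule.span A (N' : Set N))) := by
  obtain ⟨_, x, -, hx⟩ := hfg
  exact Module.Finite.iff_fg.mpr <|
    span_of_corner_findim_general e x hx N' (Module.Finite.iff_fg.mp inferInstance) h1 h2
end

section
/- Let k be a field, A an associative k-algebra, and e ∈ A an idempotent such that A·e is finitely generated as a right module over the corner ring eAe (there exist x₁, …, x_n ∈ A·e with A·e = Σᵢ xᵢ·(eAe)). Let N be a left A-module and let N' be a finite-dimensional k-subspace of N with e•x = x for all x ∈ N' and (e·r·e)•x ∈ N' for all r ∈ A, x ∈ N'. Then there exists a finite-dimensional A-submodule N₁ of N such that e•N₁ = N'. (This is precisely the paper's intermediate claim, in the proof of the adjunction of τ* and τ∗, that every finite-dimensional submodule of j*N is the image under j* of a finite-dimensional submodule of N.) -/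
/-! The lift is the submodule `N₁ = A N'` generated by `N'`. Since `e` fixes `N'` pointwise and
`A e = ∑ i, x i (e A e)`, we have `A N' = (A e) N' = ∑ i, x i (e A e) N' = ∑ i, x i N'`, a finite
sum of images of `N'`; moreover `e (A N') = (e A e) N' = N'`. -/

section Corner

open Submodule
open scoped Pointwise

variable {A N : Type*} [Semiring A] [AddCommMonoid N] [Module A N]

theorem toAddSubmonoid_span_le_iff {s : Set N} {Q : AddSubmonoid N} :
    (span A s).toAddSubmonoid ≤ Q ↔ ∀ a : A, ∀ x ∈ s, a • x ∈ Q := by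
  rw [span_eq_closure, AddSubmonoid.closure_le, Set.smul_subset_iff]
  simp only [Set.mem_univ, true_imp_iff, SetLike.mem_coe]

theorem smul_mem_of_mem_span_of_corner_smul_mem {e : A} {P : AddSubmonoid N}
    (fixed : ∀ x ∈ P, e • x = x) (stable : ∀ r : A, ∀ x ∈ P, (e * r * e) • x ∈ P)
    {y : N} (hy : y ∈ span A (P : Set N)) : e • y ∈ P := by
  suffices (span A (P : Set N)).toAddSubmonoid ≤ P.comap (DistribSMul.toAddMonoidHom N e) from
    this hy
  refine toAddSubmonoid_span_le_iff.mpr fun a x hx ↦ ?_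
  have corner_smul : (e * a * e) • x = e • a • x := by rw [mul_smul, fixed x hx, mul_smul]
  rw [AddSubmonoid.mem_comap, DistribSMul.toAddMonoidHom_apply, ← corner_smul]
  exact stable a x hx

theorem image_smul_span_eq_of_corner_smul_mem {e : A} {P : AddSubmonoid N}
    (fixed : ∀ x ∈ P, e • x = x) (stable : ∀ r : A, ∀ x ∈ P, (e * r * e) • x ∈ P) :
    (fun x : N ↦ e • x) '' (span A (P : Set N) : Set N) = P := by
  apply Set.Subset.antisymm
  · rintro _ ⟨y, hy, rfl⟩
    exact smul_mem_of_mem_span_of_corner_smul_mem fixed stable hy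
  · exact fun y hy ↦ ⟨y, subset_span hy, fixed y hy⟩

variable {k : Type*} [CommSemiring k] [Algebra k A] [Module k N] [IsScalarTower k A N]
  {ι : Type*} [Fintype ι] {x : ι → A} {e : A} {P : Submodule k N}

theorem restrictScalars_span_eq_iSup_smul
    (gen : ∀ a : A, ∃ r : ι → A, a * e = ∑ i, x i * (e * r i * e))
    (fixed : ∀ y ∈ P, e • y = y) (stable : ∀ r : A, ∀ y ∈ P, (e * r * e) • y ∈ P) :
    (span A (P : Set N)).restrictScalars k = ⨆ i, x i • P := by
  apply le_antisymm
  · suffices (span A (P : Set N)).toAddSubmonoid ≤ (⨆ i, x i • P).toAddSubmonoid from this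
    refine toAddSubmonoid_span_le_iff.mpr fun a y hy ↦ ?_
    obtain ⟨r, hr⟩ := gen a
    have smul_eq_sum : a • y = ∑ i, x i • (e * r i * e) • y := calc
      a • y = (a * e) • y := by rw [mul_smul, fixed y hy]
      _ = ∑ i, x i • (e * r i * e) • y := by simp only [hr, Finset.sum_smul, mul_smul]
    rw [smul_eq_sum]
    exact sum_mem fun i _ ↦ mem_iSup_of_mem i (smul_mem_pointwise_smul _ _ _ (stable (r i) y hy))
  · refine iSup_le fun i ↦ ?_
    rintro _ ⟨y, hy, rfl⟩
    exact (span A (P : Set N)).smul_mem (x i) (subset_span hy)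

theorem corner_lifts_findim_general [Module.Finite k P]
    (gen : ∀ a : A, ∃ r : ι → A, a * e = ∑ i, x i * (e * r i * e))
    (fixed : ∀ y ∈ P, e • y = y) (stable : ∀ r : A, ∀ y ∈ P, (e * r * e) • y ∈ P) :
    ∃ Q : Submodule A N, Module.Finite k (Q.restrictScalars k) ∧
      (fun y : N ↦ e • y) '' (Q : Set N) = P := by
  have P_fg : P.FG := Module.Finite.iff_fg.mp inferInstance
  refine ⟨span A P, ?_,
    image_smul_span_eq_of_corner_smul_mem (P := P.toAddSubmonoid) fixed stable⟩
  rw [Module.Finite.iff_fg, restrictScalars_span_eq_iSup_smul gen fixed stable]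
  exact fg_iSup _ fun i ↦ P_fg.map _

end Corner

/-- If `A·e` is finitely generated as a right `eAe`-module, then every
finite-dimensional corner-stable subspace `N'` of a left `A`-module `N` is the
corner `e • N₁` of a finite-dimensional `A`-submodule `N₁` of `N`. -/
theorem corner_lifts_findim (k : Type*) [Field k] (A : Type*) [Ring A] [Algebra k A]
    (e : A) (he : e * e = e)
    (hfg : ∃ (n : ℕ) (x : Fin n → A), (∀ i, ∃ a : A, x i = a * e) ∧
      ∀ a : A, ∃ r : Fin n → A, a * e = ∑ i, x i * (e * r i * e))
    (N : Type*) [AddCommGroup N] [Module A N] [Module k N] [IsScalarTower k A N]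
    (N' : Submodule k N) [FiniteDimensional k N']
    (h1 : ∀ x ∈ N', e • x = x)
    (h2 : ∀ (r : A), ∀ x ∈ N', (e * r * e) • x ∈ N') :
    ∃ N₁ : Submodule A N,
      FiniteDimensional k (Submodule.restrictScalars k N₁) ∧
      (fun x : N => e • x) '' (N₁ : Set N) = (N' : Set N) := by
  obtain ⟨n, x, -, gen⟩ := hfg
  exact corner_lifts_findim_general gen h1 h2
end
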